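/- arXiv:2309.09188 — 2 statements merged into one kernel-verified Lean document; each statement's English description precedes it below -/
import Mathlib

section
/- Let (P, ⪰) be a finite poset with P = {p_1,...,p_n} and Hibi ideal H_P ⊂ S = K[x_1,...,x_n,y_1,...,y_n]. For every k ≥ 1 and all indices i ≠ j with p_i ≺ p_j, the local v-number at the associated prime (x_i, y_j) of H_P^k is v_{(x_i,y_j)}(H_P^k) = |P|·k + |{ p_ℓ ∈ P : p_i ≺ p_ℓ ≺ p_j }|; moreover v_{(x_i,y_i)}(H_P^k) = |P|·k − 1 for all p_i ∈ P. -/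
open MvPolynomial

noncomputable section

variable (K : Type*) [Field K]

/-- The set of associated primes of `S/I`. -/
def assPrimes {σ : Type*} (I : Ideal (MvPolynomial σ K)) : Set (Ideal (MvPolynomial σ K)) :=
  associatedPrimes (MvPolynomial σ K) (MvPolynomial σ K ⧸ I)

/-- The v-number of `I` at a prime `p`:
`min {d : ∃ homogeneous f of degree d with (I : f) = p}`. -/
def vNumberAt {σ : Type*} (I p : Ideal (MvPolynomial σ K)) : ℕ :=
  sInf {d | ∃ f : MvPolynomial σ K, f.IsHomogeneous d ∧ I.colon (Ideal.span {f}) = p}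

/-- The v-number of `I`:
`min {d : ∃ homogeneous f of degree d with (I : f) ∈ Ass(I)}`. -/
def vNumber {σ : Type*} (I : Ideal (MvPolynomial σ K)) : ℕ :=
  sInf {d | ∃ f : MvPolynomial σ K, f.IsHomogeneous d ∧
    I.colon (Ideal.span {f}) ∈ assPrimes K I}

/-- The initial degree `α(I) = min {d : I_d ≠ 0}`. -/
def initialDegree {σ : Type*} (I : Ideal (MvPolynomial σ K)) : ℕ :=
  sInf {d | ∃ f ∈ I, f ≠ 0 ∧ f.IsHomogeneous d}

/-- The generator `u_𝓘 = (∏_{i ∈ 𝓘} x_i) (∏_{i ∉ 𝓘} y_i)` of the Hibi ideal attached to a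
poset ideal `𝓘`; the variables are indexed by `P ⊕ P`, `x_i = X (inl i)`, `y_i = X (inr i)`. -/
def posetGen {P : Type*} [Fintype P] [DecidableEq P] (𝓘 : Finset P) :
    MvPolynomial (P ⊕ P) K :=
  (∏ i ∈ 𝓘, X (Sum.inl i)) * ∏ i ∈ 𝓘ᶜ, X (Sum.inr i)

/-- The Hibi ideal of a finite poset `P`, generated by the monomials `u_𝓘` for all poset
ideals (lower sets) `𝓘` of `P`. -/
def HibiIdeal (P : Type*) [Fintype P] [DecidableEq P] [PartialOrder P] :
    Ideal (MvPolynomial (P ⊕ P) K) :=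
  Ideal.span {f | ∃ 𝓘 : Finset P, (∀ a b : P, a ≤ b → b ∈ 𝓘 → a ∈ 𝓘) ∧ f = posetGen K 𝓘}

/-!
If `I` is a monomial ideal and `(I : f)` is generated by variables, then `(I : u) = (I : f)` for
some monomial `u` of `f`, so the local v-numbers of `I` can be computed with monomials.

The power `H_P ^ k` is the intersection of the ideals `(x_i, y_j) ^ k` over `i ≤ j`, because a
generator of `H_P` can be split off every monomial of the `(k + 1)`-st such intersection. Hence
`(H_P ^ k : x ^ a y ^ b) = (x_i, y_j)` means `a_i + b_j = k - 1` and `a_r + b_s ≥ k` for all other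
pairs `r ≤ s`. Bounding `a_p + b_p` from below for each `p` separately gives a degree of at least
`|P| k + |[i, j)| - 1`, and an explicit monomial attains it. Finally `[i, j)` is empty for `i = j`
and has one element more than `(i, j)` for `i < j`.
-/

theorem sum_indicator_one_eq_ncard {α : Type*} [Fintype α] (s : Set α) :
    ∑ a, s.indicator (1 : α → ℕ) a = s.ncard := by
  classical
  simp [Set.indicator_apply, Finset.sum_boole, ← Set.ncard_coe_finset]

theorem sum_const_add_indicator_one {α : Type*} [Fintype α] (c : ℕ) (s : Set α) :
    ∑ a, (c + s.indicator 1 a) = Fintype.card α * c + s.ncard := by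
  rw [Finset.sum_add_distrib, sum_indicator_one_eq_ncard, Finset.sum_const, Finset.card_univ,
    smul_eq_mul]

section MonomialIdeal

variable {σ R : Type*} [CommSemiring R] {E F G : Set (σ →₀ ℕ)}
  {hE : IsUpperSet E} {hF : IsUpperSet F} {hG : IsUpperSet G}

theorem mem_restrictSupportIdeal_iff {f : MvPolynomial σ R} :
    f ∈ restrictSupportIdeal R E hE ↔ ∀ m ∈ f.support, m ∈ E :=
  .rfl

theorem restrictSupportIdeal_le_iff {J : Ideal (MvPolynomial σ R)} :
    restrictSupportIdeal R E hE ≤ J ↔ ∀ m ∈ E, monomial m 1 ∈ J := by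
  classical
  constructor
  · refine fun h m hm => h (mem_restrictSupportIdeal_iff.2 fun n hn => ?_)
    rwa [Finset.mem_singleton.1 (support_monomial_subset hn)]
  · intro h f hf
    rw [← support_sum_monomial_coeff f]
    refine Ideal.sum_mem _ fun m hm => ?_
    rw [← mul_one (coeff m f), ← C_mul_monomial]
    exact J.mul_mem_left _ (h m (mem_restrictSupportIdeal_iff.1 hf m hm))

open scoped Pointwise in
theorem restrictSupportIdeal_mul_le (h : E + F ⊆ G) :
    restrictSupportIdeal R E hE * restrictSupportIdeal R F hF ≤
      restrictSupportIdeal R G hG := by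
  classical
  refine Ideal.mul_le.2 fun f hf g hg m hm => h ?_
  obtain ⟨a, ha, b, hb, rfl⟩ := Finset.mem_add.1 (support_mul f g hm)
  exact Set.add_mem_add (hf ha) (hg hb)

theorem mul_monomial_mem_restrictSupportIdeal_iff {g : MvPolynomial σ R} {m : σ →₀ ℕ} :
    g * monomial m 1 ∈ restrictSupportIdeal R E hE ↔ ∀ n ∈ g.support, n + m ∈ E := by
  simp only [mem_restrictSupportIdeal_iff, mem_support_iff]
  constructor
  · intro h n hn
    exact h (n + m) (by rwa [coeff_mul_monomial, mul_one])
  · intro h e he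
    rw [coeff_mul_monomial', mul_one] at he
    have hle : m ≤ e := by_contra fun hle => he (if_neg hle)
    rw [if_pos hle] at he
    simpa only [tsub_add_cancel_of_le hle] using h (e - m) he

/-- For the monomial ideal `I` whose monomials have exponents in `E`, the exponents `m` with
`(I : x^m) = (x_v : v ∈ s)`, expressed without reference to the coefficients. -/
def IsColonWitness (E : Set (σ →₀ ℕ)) (s : Set σ) (m : σ →₀ ℕ) : Prop :=
  ∀ n, n + m ∈ E ↔ ∃ v ∈ s, n v ≠ 0

variable {s : Set σ} {m : σ →₀ ℕ}

theorem IsColonWitness.colon_monomial (h : IsColonWitness E s m) :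
    (restrictSupportIdeal R E hE).colon (Ideal.span {monomial m (1 : R)}) =
      Ideal.span (X '' s) := by
  ext g
  rw [Ideal.mem_colon_span_singleton, mul_monomial_mem_restrictSupportIdeal_iff,
    mem_ideal_span_X_image]
  exact forall₂_congr fun n _ => h n

theorem exists_isColonWitness_of_colon_eq [Nontrivial R] {f : MvPolynomial σ R}
    (h : (restrictSupportIdeal R E hE).colon (Ideal.span {f}) = Ideal.span (X '' s)) :
    ∃ m ∈ f.support, IsColonWitness E s m := by
  have monomial_mul_mem (n : σ →₀ ℕ) :
      (∀ m ∈ f.support, n + m ∈ E) ↔ ∃ v ∈ s, n v ≠ 0 := by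
    classical
    have hn := SetLike.ext_iff.1 h (monomial n 1)
    simpa only [Ideal.mem_colon_span_singleton, mul_comm _ f, add_comm _ n,
      mul_monomial_mem_restrictSupportIdeal_iff, mem_ideal_span_X_image, support_monomial,
      one_ne_zero, if_false, Finset.mem_singleton, forall_eq] using hn
  by_contra! hf
  have exists_avoiding : ∀ m ∈ f.support, ∃ n, n + m ∈ E ∧ ∀ v ∈ s, n v = 0 := by
    intro m hm
    by_contra! hm'
    exact hf m hm fun n => ⟨hm' n, fun hn => (monomial_mul_mem n).2 hn m hm⟩
  choose! n hnE hns using exists_avoiding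
  obtain ⟨v, hv, hne⟩ := (monomial_mul_mem (∑ m ∈ f.support, n m)).1 fun m hm =>
    hE (add_le_add_left (Finset.single_le_sum_of_canonicallyOrdered hm) m) (hnE m hm)
  refine hne ?_
  rw [Finsupp.finsetSum_apply]
  exact Finset.sum_eq_zero fun m hm => hns m hm v hv

end MonomialIdeal

theorem vNumberAt_restrictSupportIdeal {σ : Type*} {E : Set (σ →₀ ℕ)} (hE : IsUpperSet E)
    (s : Set σ) :
    vNumberAt K (restrictSupportIdeal K E hE) (Ideal.span (X '' s)) =
      sInf (Finsupp.degree '' {m | IsColonWitness E s m}) := by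
  rw [vNumberAt]
  congr 1
  ext d
  constructor
  · rintro ⟨f, hf, hcolon⟩
    obtain ⟨m, hm, hmw⟩ := exists_isColonWitness_of_colon_eq hcolon
    refine ⟨m, hmw, ?_⟩
    rw [Finsupp.degree_eq_weight_one]
    exact hf (mem_support_iff.1 hm)
  · rintro ⟨m, hm, rfl⟩
    exact ⟨monomial m 1, isHomogeneous_monomial 1 rfl, hm.colon_monomial⟩

section Cover

variable {P : Type*}

/-- The exponent vectors of the monomials of `⋂_{i ≤ j} (x_i, y_j) ^ k`. In the language of
graphs: the `k`-covers of the bipartite graph with an edge `{x_i, y_j}` for each `i ≤ j`. -/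
def kCovers (P : Type*) [LE P] (k : ℕ) : Set (P ⊕ P →₀ ℕ) :=
  {m | ∀ ⦃i j : P⦄, i ≤ j → k ≤ m (Sum.inl i) + m (Sum.inr j)}

theorem isUpperSet_kCovers [LE P] (k : ℕ) : IsUpperSet (kCovers P k) :=
  fun _ _ hle hm _ _ hij => (hm hij).trans (add_le_add (hle _) (hle _))

open scoped Pointwise in
theorem kCovers_add_subset [LE P] (k l : ℕ) : kCovers P k + kCovers P l ⊆ kCovers P (k + l) := by
  rintro _ ⟨m, hm, n, hn, rfl⟩ i j hij
  have := hm hij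
  have := hn hij
  simp only [Finsupp.add_apply]
  omega

/-- The exponent vector of the generator `posetGen K 𝓘`. -/
def posetGenExponent [Fintype P] [DecidableEq P] (𝓘 : Finset P) : P ⊕ P →₀ ℕ :=
  Finsupp.equivFunOnFinite.symm
    (Sum.elim (fun p => if p ∈ 𝓘 then 1 else 0) (fun p => if p ∈ 𝓘 then 0 else 1))

section PosetGenExponent

variable [Fintype P] [DecidableEq P] (𝓘 : Finset P) (p : P)

theorem posetGenExponent_inl :
    posetGenExponent 𝓘 (Sum.inl p) = if p ∈ 𝓘 then 1 else 0 := rfl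

theorem posetGenExponent_inr :
    posetGenExponent 𝓘 (Sum.inr p) = if p ∈ 𝓘 then 0 else 1 := rfl

theorem posetGen_eq_monomial : posetGen K 𝓘 = monomial (posetGenExponent 𝓘) 1 := by
  have prod_compl : ∏ p, (if p ∈ 𝓘 then 1 else X (Sum.inr p) : MvPolynomial (P ⊕ P) K) =
      ∏ p ∈ 𝓘ᶜ, X (Sum.inr p) := by
    simp only [← Finset.prod_ite_mem_eq 𝓘ᶜ, Finset.mem_compl, ite_not]
  rw [monomial_eq, map_one, one_mul, Finsupp.prod_fintype _ _ fun _ => pow_zero _,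
    Fintype.prod_sum_type]
  simp only [posetGenExponent_inl, posetGenExponent_inr, pow_ite, pow_zero, pow_one,
    Finset.prod_ite_mem_eq, prod_compl, posetGen]

end PosetGenExponent

theorem posetGenExponent_mem_kCovers [Fintype P] [DecidableEq P] [LE P] {𝓘 : Finset P}
    (h𝓘 : IsLowerSet (𝓘 : Set P)) : posetGenExponent 𝓘 ∈ kCovers P 1 := by
  intro i j hij
  by_cases hi : i ∈ 𝓘
  · simp only [posetGenExponent_inl, if_pos hi]
    omega
  · have hj : j ∉ 𝓘 := fun hj => hi (h𝓘 hij hj)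
    simp only [posetGenExponent_inr, if_neg hj]
    omega

theorem exists_posetGenExponent_le_of_mem_kCovers [Fintype P] [DecidableEq P] [Preorder P]
    {k : ℕ} {m : P ⊕ P →₀ ℕ} (hm : m ∈ kCovers P (k + 1)) :
    ∃ 𝓘 : Finset P, IsLowerSet (𝓘 : Set P) ∧ posetGenExponent 𝓘 ≤ m ∧
      m - posetGenExponent 𝓘 ∈ kCovers P k := by
  classical
  -- A pair `i ≤ j` with `i ∈ 𝓘` and `j ∉ 𝓘` loses two, so there the exponent of `y_j` alone has
  -- to exceed `k`.
  let 𝓘 : Finset P := {p | ∃ q, p ≤ q ∧ m (Sum.inr q) ≤ k}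
  have mem_𝓘 (p : P) : p ∈ 𝓘 ↔ ∃ q, p ≤ q ∧ m (Sum.inr q) ≤ k := by
    simp only [𝓘, Finset.mem_filter_univ]
  have lower : IsLowerSet (𝓘 : Set P) := by
    intro p r hrp hp
    obtain ⟨q, hpq, hq⟩ := (mem_𝓘 p).1 hp
    exact (mem_𝓘 r).2 ⟨q, hrp.trans hpq, hq⟩
  have one_le_inl {p : P} (hp : p ∈ 𝓘) : 1 ≤ m (Sum.inl p) := by
    obtain ⟨q, hpq, hq⟩ := (mem_𝓘 p).1 hp
    have := hm hpq
    omega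
  have lt_inr {p : P} (hp : p ∉ 𝓘) : k < m (Sum.inr p) :=
    not_le.1 fun hle => hp ((mem_𝓘 p).2 ⟨p, le_rfl, hle⟩)
  refine ⟨𝓘, lower, ?_, fun i j hij => ?_⟩
  · rintro (p | p) <;> by_cases hp : p ∈ 𝓘
    · simpa only [posetGenExponent_inl, if_pos hp] using one_le_inl hp
    · simp only [posetGenExponent_inl, if_neg hp, zero_le]
    · simp only [posetGenExponent_inr, if_pos hp, zero_le]
    · simpa only [posetGenExponent_inr, if_neg hp] using Nat.one_le_of_lt (lt_inr hp)
  · have hmij := hm hij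
    simp only [Finsupp.tsub_apply, posetGenExponent_inl, posetGenExponent_inr]
    by_cases hj : j ∈ 𝓘
    · have hi : i ∈ 𝓘 := lower hij hj
      simp only [if_pos hi, if_pos hj]
      omega
    · have := lt_inr hj
      simp only [if_neg hj]
      omega

theorem hibiIdeal_le_restrictSupportIdeal [Fintype P] [DecidableEq P] [PartialOrder P] :
    HibiIdeal K P ≤ restrictSupportIdeal K (kCovers P 1) (isUpperSet_kCovers 1) := by
  refine Ideal.span_le.2 ?_
  rintro _ ⟨𝓘, h𝓘, rfl⟩
  rw [posetGen_eq_monomial]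
  exact restrictSupportIdeal_le_iff.1 le_rfl _
    (posetGenExponent_mem_kCovers fun _ _ hle => h𝓘 _ _ hle)

theorem hibiIdeal_pow_eq_restrictSupportIdeal [Fintype P] [DecidableEq P] [PartialOrder P]
    (k : ℕ) :
    HibiIdeal K P ^ k = restrictSupportIdeal K (kCovers P k) (isUpperSet_kCovers k) := by
  apply le_antisymm
  · induction k with
    | zero => exact fun f _ m _ i j _ => Nat.zero_le _
    | succ k ih =>
      rw [pow_succ]
      exact (Ideal.mul_mono ih (hibiIdeal_le_restrictSupportIdeal K)).trans
        (restrictSupportIdeal_mul_le (kCovers_add_subset k 1))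
  · rw [restrictSupportIdeal_le_iff]
    induction k with
    | zero => simp
    | succ k ih =>
      intro m hm
      obtain ⟨𝓘, h𝓘, hle, hsub⟩ := exists_posetGenExponent_le_of_mem_kCovers hm
      rw [← tsub_add_cancel_of_le hle, ← mul_one (1 : K), ← monomial_mul,
        ← posetGen_eq_monomial, pow_succ]
      exact Ideal.mul_mem_mul (ih _ hsub)
        (Ideal.subset_span ⟨𝓘, fun _ _ hab hb => h𝓘 hab hb, rfl⟩)

/-- The exponents which fail to be a `k`-cover at the pair `(i, j)` only, and there by one. For
`i ≤ j` these are the `m` with `(H_P ^ k : x ^ m) = (x_i, y_j)`. -/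
structure IsNearCover [LE P] (k : ℕ) (i j : P) (m : P ⊕ P →₀ ℕ) : Prop where
  add_one_eq : m (Sum.inl i) + m (Sum.inr j) + 1 = k
  le_add : ∀ ⦃r s : P⦄, r ≤ s → (r, s) ≠ (i, j) → k ≤ m (Sum.inl r) + m (Sum.inr s)

section IsNearCover

variable {k : ℕ} {i j : P} {m : P ⊕ P →₀ ℕ}

theorem IsColonWitness.isNearCover [LE P] (hij : i ≤ j)
    (h : IsColonWitness (kCovers P k) {Sum.inl i, Sum.inr j} m) : IsNearCover k i j m := by
  classical
  have single_inl_add_mem := (h (Finsupp.single (Sum.inl i) 1)).2 ⟨Sum.inl i, by simp⟩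
  have single_inr_add_mem := (h (Finsupp.single (Sum.inr j) 1)).2 ⟨Sum.inr j, by simp⟩
  have not_mem : m ∉ kCovers P k := by
    simpa using (h 0).not
  have le_add : ∀ ⦃r s : P⦄, r ≤ s → (r, s) ≠ (i, j) →
      k ≤ m (Sum.inl r) + m (Sum.inr s) := by
    intro r s hrs hne
    rcases eq_or_ne r i with rfl | hr
    · have hs : s ≠ j := fun hs => hne (by rw [hs])
      simpa [Finsupp.single_apply, hs.symm] using single_inr_add_mem hrs
    · simpa [Finsupp.single_apply, hr.symm] using single_inl_add_mem hrs
  have le_add_one : k ≤ m (Sum.inl i) + m (Sum.inr j) + 1 := by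
    simpa [add_comm, add_left_comm] using single_inl_add_mem hij
  have add_lt : m (Sum.inl i) + m (Sum.inr j) < k := by
    by_contra! hle
    refine not_mem fun r s hrs => ?_
    by_cases hrs' : (r, s) = (i, j)
    · cases hrs'
      exact hle
    · exact le_add hrs hrs'
  exact ⟨by omega, le_add⟩

theorem IsNearCover.isColonWitness [LE P] (hij : i ≤ j) (h : IsNearCover k i j m) :
    IsColonWitness (kCovers P k) {Sum.inl i, Sum.inr j} m := by
  intro n
  have := h.add_one_eq
  simp only [kCovers, Set.mem_ofPred_eq, Finsupp.add_apply, Set.mem_insert_iff,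
    Set.mem_singleton_iff, exists_eq_or_imp, exists_eq_left]
  constructor
  · intro hn
    have := hn hij
    omega
  · intro hn r s hrs
    by_cases hrs' : (r, s) = (i, j)
    · cases hrs'
      omega
    · have := h.le_add hrs hrs'
      omega

-- For `i < p < j` the extra `1` comes from adding the inequalities at `(i, p)` and `(p, j)`
-- and subtracting the equality at `(i, j)`.
theorem IsNearCover.add_indicator_le [Preorder P] (h : IsNearCover k i j m) (p : P) :
    k + (Set.Ico i j).indicator 1 p ≤
      m (Sum.inl p) + m (Sum.inr p) + ({i} : Set P).indicator 1 p := by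
  classical
  have at_ij := h.add_one_eq
  simp only [Set.indicator_apply, Pi.one_apply, Set.mem_singleton_iff]
  rcases eq_or_ne p i with rfl | hpi
  · rw [if_pos rfl]
    rcases eq_or_ne p j with rfl | hpj
    · rw [if_neg Set.right_notMem_Ico]
      omega
    · have at_pp := h.le_add (le_refl p) (by simp [hpj])
      split_ifs <;> omega
  · rw [if_neg hpi]
    split_ifs with hp
    · have at_ip := h.le_add hp.1 (by simp [hp.2.ne])
      have at_pj := h.le_add hp.2.le (by simp [hpi])
      omega
    · exact h.le_add (le_refl p) (by simp [hpi])

theorem sum_add_indicator_singleton_eq_degree_add_one [Fintype P] (m : P ⊕ P →₀ ℕ) (i : P) :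
    ∑ p, (m (Sum.inl p) + m (Sum.inr p) + ({i} : Set P).indicator 1 p) = m.degree + 1 := by
  rw [Finset.sum_add_distrib, sum_indicator_one_eq_ncard, Set.ncard_singleton,
    Finset.sum_add_distrib, Finsupp.degree_eq_sum, Fintype.sum_sum_type]

theorem IsNearCover.card_mul_add_ncard_le [Fintype P] [Preorder P]
    (h : IsNearCover k i j m) :
    Fintype.card P * k + (Set.Ico i j).ncard ≤ m.degree + 1 := by
  rw [← sum_const_add_indicator_one, ← sum_add_indicator_singleton_eq_degree_add_one m i]
  exact Finset.sum_le_sum fun p _ => h.add_indicator_le p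

open scoped Classical in
/-- The exponent vector of `(∏_{r ≤ j} x_r ^ k) (∏_{r ≰ j} y_r ^ k) (∏_{i ≤ r < j} y_r) / x_i`, a
near cover of least degree. -/
def minNearCover [Finite P] [Preorder P] (k : ℕ) (i j : P) : P ⊕ P →₀ ℕ :=
  Finsupp.equivFunOnFinite.symm
    (Sum.elim (fun r => if r ≤ j then k - ({i} : Set P).indicator 1 r else 0)
      (fun r => if r ≤ j then (Set.Ico i j).indicator 1 r else k))

section MinNearCover

variable [Finite P] [Preorder P]

open scoped Classical in
theorem minNearCover_inl (k : ℕ) (i j r : P) :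
    minNearCover k i j (Sum.inl r) = if r ≤ j then k - ({i} : Set P).indicator 1 r else 0 := rfl

open scoped Classical in
theorem minNearCover_inr (k : ℕ) (i j r : P) :
    minNearCover k i j (Sum.inr r) = if r ≤ j then (Set.Ico i j).indicator 1 r else k := rfl

theorem minNearCover_add_indicator (hk : 1 ≤ k) (hij : i ≤ j) (p : P) :
    minNearCover k i j (Sum.inl p) + minNearCover k i j (Sum.inr p) +
        ({i} : Set P).indicator 1 p =
      k + (Set.Ico i j).indicator 1 p := by
  classical
  simp only [minNearCover_inl, minNearCover_inr, Set.indicator_apply, Set.mem_singleton_iff,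
    Pi.one_apply]
  by_cases hpj : p ≤ j
  · simp only [if_pos hpj]
    split_ifs <;> omega
  · have hpi : p ≠ i := fun h => hpj (h ▸ hij)
    have hp : p ∉ Set.Ico i j := fun h => hpj h.2.le
    simp only [if_neg hpj, if_neg hpi, if_neg hp, zero_add, add_zero]

end MinNearCover

theorem isNearCover_minNearCover [Finite P] [PartialOrder P] (hk : 1 ≤ k) (hij : i ≤ j) :
    IsNearCover k i j (minNearCover k i j) := by
  classical
  constructor <;> simp only [minNearCover_inl, minNearCover_inr, Set.indicator_apply,
    Set.mem_singleton_iff, Pi.one_apply]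
  · rw [if_pos hij, if_pos trivial, if_pos le_rfl, if_neg Set.right_notMem_Ico]
    omega
  · intro r s hrs hne
    by_cases hsj : s ≤ j
    · rw [if_pos (hrs.trans hsj), if_pos hsj]
      rcases eq_or_ne r i with rfl | hri
      · have hs : s ∈ Set.Ico r j := ⟨hrs, hsj.lt_of_ne fun h => hne (by rw [h])⟩
        rw [if_pos rfl, if_pos hs]
        omega
      · rw [if_neg hri]
        omega
    · rw [if_neg hsj]
      omega

theorem degree_minNearCover_add_one [Fintype P] [Preorder P] (hk : 1 ≤ k) (hij : i ≤ j) :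
    (minNearCover k i j).degree + 1 = Fintype.card P * k + (Set.Ico i j).ncard := by
  rw [← sum_const_add_indicator_one, ← sum_add_indicator_singleton_eq_degree_add_one _ i]
  exact Finset.sum_congr rfl fun p _ => minNearCover_add_indicator hk hij p

end IsNearCover

theorem vNumberAt_hibiIdeal_pow_add_one [Fintype P] [DecidableEq P] [PartialOrder P] {k : ℕ}
    (hk : 1 ≤ k) {i j : P} (hij : i ≤ j) :
    vNumberAt K (HibiIdeal K P ^ k)
        (Ideal.span {(X (Sum.inl i) : MvPolynomial (P ⊕ P) K), X (Sum.inr j)}) + 1 =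
      Fintype.card P * k + (Set.Ico i j).ncard := by
  have least : IsLeast (Finsupp.degree '' {m : P ⊕ P →₀ ℕ |
      IsColonWitness (kCovers P k) {Sum.inl i, Sum.inr j} m})
      (minNearCover k i j).degree := by
    refine ⟨⟨_, (isNearCover_minNearCover hk hij).isColonWitness hij, rfl⟩, ?_⟩
    rintro _ ⟨m, hm, rfl⟩
    have := (hm.isNearCover hij).card_mul_add_ncard_le
    rw [← degree_minNearCover_add_one hk hij] at this
    exact Nat.le_of_add_le_add_right this
  rw [← Set.image_pair, hibiIdeal_pow_eq_restrictSupportIdeal, vNumberAt_restrictSupportIdeal,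
    least.csInf_eq, degree_minNearCover_add_one hk hij]

end Cover

/-- For every `k ≥ 1`: for `p_i ≺ p_j` the local v-number of `H_P^k` at `(x_i, y_j)` equals
`|P|·k + |{p_ℓ : p_i ≺ p_ℓ ≺ p_j}|`, and at `(x_i, y_i)` it equals `|P|·k - 1`. -/
theorem stmt18 (P : Type*) [Fintype P] [DecidableEq P] [PartialOrder P]
    (k : ℕ) (hk : 1 ≤ k) :
    (∀ i j : P, i < j →
      vNumberAt K ((HibiIdeal K P) ^ k)
        (Ideal.span {(X (Sum.inl i) : MvPolynomial (P ⊕ P) K), X (Sum.inr j)}) =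
        Fintype.card P * k + Set.ncard {l : P | i < l ∧ l < j}) ∧
    (∀ i : P,
      vNumberAt K ((HibiIdeal K P) ^ k)
        (Ideal.span {(X (Sum.inl i) : MvPolynomial (P ⊕ P) K), X (Sum.inr i)}) =
        Fintype.card P * k - 1) := by
  refine ⟨fun i j hij => ?_, fun i => ?_⟩
  · have h := vNumberAt_hibiIdeal_pow_add_one K hk hij.le
    rw [← Set.Ioo_insert_left hij, Set.ncard_insert_of_notMem Set.left_notMem_Ioo, ← add_assoc]
      at h
    exact Nat.add_right_cancel h
  · have h := vNumberAt_hibiIdeal_pow_add_one K hk (le_refl i)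
    rw [Set.Ico_self, Set.ncard_empty, add_zero] at h
    exact Nat.eq_sub_of_add_eq h

end
end

section
/- Let (P, ⪰) be a finite poset with Hibi ideal H_P ⊂ S = K[x_1,...,x_n,y_1,...,y_n]. Then v(H_P^k) = k·|P| − 1 for all k ≥ 1. -/
open MvPolynomial

noncomputable section

variable (K : Type*) [Field K]

/-!
If `(I : f)` is prime for a homogeneous `f` and `I` contains a monomial, then `(I : f)` contains a
variable `X i`, so `X i * f` is a nonzero element of `I` and `deg f + 1` is at least the least
degree in `I`. For `I = H_P ^ k` this gives `v(H_P ^ k) ≥ k * |P| - 1`.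

For the converse let `p` be minimal in `P`, `h = ∏_{q ≠ p} y_q` and `Q = (x_p, y_p)`. Both
`y_p * h = u_∅` and `x_p * h = u_{p}` lie in `H_P`, and `H_P ⊆ Q` because each `u_𝓘` involves one of
`x_p`, `y_p`. Then `(H_P ^ (k + 1) : (x_p * h) ^ k * h) = Q`: if `g * (x_p * h) ^ k * h` lies in
`Q ^ (k + 1)`, then modulo the prime `(y_p)` a factor `x_p ^ k` can be cancelled, which leaves
`g * h ^ (k + 1) ∈ Q`, and `h ∉ Q`.
-/

section CommRing

variable {A : Type*} [CommRing A]

theorem colon_span_singleton_mem_associatedPrimes {I : Ideal A} {f : A}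
    (hp : (I.colon (Ideal.span {f})).IsPrime) :
    I.colon (Ideal.span {f}) ∈ associatedPrimes A (A ⧸ I) := by
  refine ⟨hp, Ideal.Quotient.mk I f, ?_⟩
  have hcolon : (⊥ : Submodule A (A ⧸ I)).colon {Ideal.Quotient.mk I f} =
      I.colon (Ideal.span {f}) := by
    ext g
    rw [Submodule.mem_colon_singleton, Ideal.mem_colon_span_singleton, Submodule.mem_bot,
      ← Ideal.Quotient.eq_zero_iff_mem, map_mul, Algebra.smul_def,
      Ideal.Quotient.algebraMap_eq]
  rw [hcolon, hp.radical]

theorem mem_span_singleton_sup_of_pow_mul_mem {J : Ideal A} [J.IsPrime] {x g : A} (hx : x ∉ J)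
    {k : ℕ} (hg : x ^ k * g ∈ (Ideal.span {x} ⊔ J) ^ (k + 1)) : g ∈ Ideal.span {x} ⊔ J := by
  let π := Ideal.Quotient.mk J
  have hmap : (Ideal.span {x} ⊔ J).map π = Ideal.span {π x} := by
    rw [Ideal.map_sup, Ideal.map_quotient_self, sup_bot_eq, Ideal.map_span, Set.image_singleton]
  have hx' : π x ≠ 0 := by rwa [Ne, Ideal.Quotient.eq_zero_iff_mem]
  have hdvd : π x ^ k * π x ∣ π x ^ k * π g := by
    have := Ideal.mem_map_of_mem π hg
    rwa [Ideal.map_pow, hmap, Ideal.span_singleton_pow, Ideal.mem_span_singleton, map_mul,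
      map_pow, pow_succ] at this
  rw [← Ideal.mem_quotient_iff_mem_sup, Ideal.map_span, Set.image_singleton,
    Ideal.mem_span_singleton]
  exact (mul_dvd_mul_iff_left (pow_ne_zero k hx')).1 hdvd

theorem colon_pow_succ_eq {I J Q : Ideal A} [J.IsPrime] [hQ : Q.IsPrime] {x h : A}
    (hQJ : Q = Ideal.span {x} ⊔ J) (hx : x ∉ J) (hIQ : I ≤ Q) (hh : h ∉ Q)
    (hQI : Q ≤ I.colon (Ideal.span {h})) (k : ℕ) :
    (I ^ (k + 1)).colon (Ideal.span {(x * h) ^ k * h}) = Q := by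
  ext g
  rw [Ideal.mem_colon_span_singleton]
  constructor
  · intro hg
    have hxg : x ^ k * (h ^ (k + 1) * g) ∈ Q ^ (k + 1) := by
      convert Ideal.pow_right_mono hIQ (k + 1) hg using 1
      ring
    have hhg : h ^ (k + 1) * g ∈ Q := by
      rw [hQJ] at hxg ⊢
      exact mem_span_singleton_sup_of_pow_mul_mem hx hxg
    exact (hQ.mem_or_mem hhg).resolve_left fun hpow => hh (hQ.mem_of_pow_mem _ hpow)
  · intro hg
    have hxQ : x ∈ Q := hQJ ▸ Ideal.mem_sup_left (Ideal.mem_span_singleton_self x)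
    have hmulI : ∀ q ∈ Q, q * h ∈ I := fun q hq => Ideal.mem_colon_span_singleton.1 (hQI hq)
    rw [mul_left_comm, pow_succ]
    exact Ideal.mul_mem_mul (Ideal.pow_mem_pow (hmulI x hxQ) k) (hmulI g hg)

end CommRing

section MvPolynomial

variable {σ R : Type*}

theorem ker_killCompl [CommSemiring R] {τ : Type*} {f : σ → τ} (hf : Function.Injective f) :
    RingHom.ker (killCompl (R := R) hf) = Ideal.span (X '' (Set.range f)ᶜ) := by
  ext p
  rw [RingHom.mem_ker, mem_ideal_span_X_image]
  constructor
  · intro hp m hm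
    by_contra! hsupp
    have hrange : (m.support : Set τ) ⊆ Set.range f := fun i hi => by
      by_contra hi'
      exact Finsupp.mem_support_iff.1 hi (hsupp i hi')
    rw [mem_support_iff, ← Finsupp.mapDomain_comapDomain f hf m hrange, ← coeff_killCompl hf,
      hp, coeff_zero] at hm
    exact hm rfl
  · intro hp
    ext m
    rw [coeff_killCompl, coeff_zero]
    by_contra hm
    obtain ⟨i, hi, hmi⟩ := hp _ (mem_support_iff.2 hm)
    exact hmi (Finsupp.mapDomain_of_notMem_range m i hi)

theorem isPrime_span_X_image [CommRing R] [IsDomain R] (s : Set σ) :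
    (Ideal.span (X '' s) : Ideal (MvPolynomial σ R)).IsPrime := by
  have hker := ker_killCompl (R := R) (Subtype.val_injective (p := (· ∈ sᶜ)))
  rw [Subtype.range_coe_subtype, Set.ofPred_mem_eq, compl_compl] at hker
  exact hker ▸ RingHom.ker_isPrime _

theorem monomial_mem_span_X_image_iff [CommSemiring R] [Nontrivial R] {m : σ →₀ ℕ} {s : Set σ} :
    monomial m (1 : R) ∈ Ideal.span (X '' s) ↔ ∃ i ∈ s, m i ≠ 0 := by
  classical
  simp [mem_ideal_span_X_image, support_monomial]

theorem exists_X_mem_of_monomial_mem [CommSemiring R] {p : Ideal (MvPolynomial σ R)}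
    (hp : p.IsPrime) {m : σ →₀ ℕ} (hm : monomial m 1 ∈ p) : ∃ i, X i ∈ p := by
  rw [monomial_eq, C_1, one_mul, Finsupp.prod, hp.prod_mem_iff] at hm
  obtain ⟨i, -, hi⟩ := hm
  exact ⟨i, hp.mem_of_pow_mem _ hi⟩

theorem prod_X_mem_pow_idealOfVars [CommSemiring R] {ι : Type*} (s : Finset ι) (v : ι → σ) :
    ∏ i ∈ s, X (v i) ∈ idealOfVars σ R ^ s.card := by
  rw [← Finset.prod_const]
  exact Ideal.prod_mem_prod fun i _ => Ideal.subset_span ⟨v i, rfl⟩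

theorem le_of_isHomogeneous_of_mem_pow_idealOfVars [CommSemiring R] {f : MvPolynomial σ R}
    {d n : ℕ} (hd : f.IsHomogeneous d) (hf : f ≠ 0) (hn : f ∈ idealOfVars σ R ^ n) : n ≤ d := by
  obtain ⟨m, hm⟩ := support_nonempty.2 hf
  exact ((mem_pow_idealOfVars_iff n f).1 hn m hm).trans_eq (hd.degree_eq_sum_deg_support hm).symm

theorem le_degree_add_one_of_isPrime_colon [CommSemiring R]
    {I : Ideal (MvPolynomial σ R)} {n d : ℕ} {m : σ →₀ ℕ} {f : MvPolynomial σ R}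
    (hI : I ≤ idealOfVars σ R ^ n) (hm : monomial m 1 ∈ I) (hf : f.IsHomogeneous d)
    (hp : (I.colon (Ideal.span {f})).IsPrime) : n ≤ d + 1 := by
  have hf0 : f ≠ 0 := by
    rintro rfl
    exact hp.ne_top (by simp)
  obtain ⟨i, hi⟩ := exists_X_mem_of_monomial_mem hp (Ideal.le_colon hm)
  have hif : f * X i ∈ I := by rwa [mul_comm, ← Ideal.mem_colon_span_singleton]
  exact le_of_isHomogeneous_of_mem_pow_idealOfVars (hf.mul (isHomogeneous_X R i))
    (isRegular_X.right.mul_right_eq_zero_iff.not.2 hf0) (hI hif)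

theorem colon_pow_succ_eq_span_X_image [CommRing R] [IsDomain R] {I : Ideal (MvPolynomial σ R)}
    {s : Set σ} {i : σ} {h : MvPolynomial σ R} (hi : i ∈ s) (hIs : I ≤ Ideal.span (X '' s))
    (hh : h ∉ Ideal.span (X '' s)) (hhI : ∀ j ∈ s, X j * h ∈ I) (k : ℕ) :
    (I ^ (k + 1)).colon (Ideal.span {(X i * h) ^ k * h}) = Ideal.span (X '' s) := by
  have := isPrime_span_X_image (R := R) s
  have := isPrime_span_X_image (R := R) (s \ {i})
  have hsplit : Ideal.span (X '' s) =
      Ideal.span {(X i : MvPolynomial σ R)} ⊔ Ideal.span (X '' (s \ {i})) := by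
    rw [← Ideal.span_insert, ← Set.image_insert_eq, Set.insert_sdiff_singleton,
      Set.insert_eq_of_mem hi]
  have hXi : (X i : MvPolynomial σ R) ∉ Ideal.span (X '' (s \ {i})) := by
    intro hmem
    obtain ⟨j, ⟨-, hji⟩, hj⟩ := monomial_mem_span_X_image_iff.1 hmem
    exact hj (Finsupp.single_eq_of_ne hji)
  have hle : Ideal.span (X '' s) ≤ I.colon (Ideal.span {h}) := by
    rw [Ideal.span_le, Set.image_subset_iff]
    exact fun j hj => Ideal.mem_colon_span_singleton.2 (hhI j hj)
  exact colon_pow_succ_eq hsplit hXi hIs hh hle k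

end MvPolynomial

section VNumber

variable {K} {σ : Type*} {I : Ideal (MvPolynomial σ K)}

theorem vNumber_top : vNumber K (⊤ : Ideal (MvPolynomial σ K)) = 0 := by
  rw [vNumber, Nat.sInf_eq_zero, Set.eq_empty_iff_forall_notMem]
  right
  rintro d ⟨f, -, hf⟩
  exact hf.isPrime.ne_top Submodule.top_colon

theorem vNumber_eq_of_isPrime_colon {d : ℕ} {m : σ →₀ ℕ} {f : MvPolynomial σ K}
    (hI : I ≤ idealOfVars σ K ^ (d + 1)) (hm : monomial m 1 ∈ I) (hf : f.IsHomogeneous d)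
    (hp : (I.colon (Ideal.span {f})).IsPrime) : vNumber K I = d := by
  refine IsLeast.csInf_eq ⟨⟨f, hf, colon_span_singleton_mem_associatedPrimes hp⟩, ?_⟩
  rintro e ⟨g, hg, hass⟩
  exact Nat.le_of_succ_le_succ (le_degree_add_one_of_isPrime_colon hI hm hg hass.isPrime)

theorem vNumber_pow_succ_of_X_mul_monomial_mem {s : Set σ} {i : σ} {m : σ →₀ ℕ} (hi : i ∈ s)
    (hI : I ≤ idealOfVars σ K ^ (m.degree + 1)) (hIs : I ≤ Ideal.span (X '' s))
    (hms : ∀ j ∈ s, m j = 0) (hmI : ∀ j ∈ s, X j * monomial m 1 ∈ I) (k : ℕ) :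
    vNumber K (I ^ (k + 1)) = k * (m.degree + 1) + m.degree := by
  have hm : monomial m (1 : K) ∉ Ideal.span (X '' s) := by
    simpa [monomial_mem_span_X_image_iff] using hms
  have hpow : I ^ (k + 1) ≤ idealOfVars σ K ^ (k * (m.degree + 1) + m.degree + 1) := by
    rw [add_assoc, ← Nat.succ_mul, mul_comm, pow_mul]
    exact Ideal.pow_right_mono hI _
  have hmonomial : monomial ((k + 1) • (Finsupp.single i 1 + m)) 1 ∈ I ^ (k + 1) := by
    convert Ideal.pow_mem_pow (hmI i hi) (k + 1) using 1
    rw [X, monomial_mul, monomial_pow, one_mul, one_pow]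
  have hhom : ((X i * monomial m (1 : K)) ^ k * monomial m 1).IsHomogeneous
      (k * (m.degree + 1) + m.degree) := by
    have hmhom : (monomial m (1 : K)).IsHomogeneous m.degree := isHomogeneous_monomial 1 rfl
    rw [mul_comm k, add_comm m.degree 1]
    exact (((isHomogeneous_X K i).mul hmhom).pow k).mul hmhom
  refine vNumber_eq_of_isPrime_colon hpow hmonomial hhom ?_
  rw [colon_pow_succ_eq_span_X_image hi hIs hm hmI]
  exact isPrime_span_X_image s

end VNumber

namespace HibiIdeal

variable {P : Type*} [Fintype P] [DecidableEq P]

theorem X_inl_dvd_posetGen {p : P} {𝓘 : Finset P} (hp : p ∈ 𝓘) :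
    X (Sum.inl p) ∣ posetGen K 𝓘 :=
  dvd_mul_of_dvd_left (Finset.dvd_prod_of_mem (fun i => X (Sum.inl i)) hp) _

theorem X_inr_dvd_posetGen {p : P} {𝓘 : Finset P} (hp : p ∉ 𝓘) :
    X (Sum.inr p) ∣ posetGen K 𝓘 :=
  dvd_mul_of_dvd_right
    (Finset.dvd_prod_of_mem (fun i => X (Sum.inr i)) (Finset.mem_compl.2 hp)) _

theorem posetGen_mem_pow_idealOfVars (𝓘 : Finset P) :
    posetGen K 𝓘 ∈ idealOfVars (P ⊕ P) K ^ Fintype.card P := by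
  rw [← Finset.card_add_card_compl 𝓘, pow_add]
  exact Ideal.mul_mem_mul (prod_X_mem_pow_idealOfVars 𝓘 _) (prod_X_mem_pow_idealOfVars 𝓘ᶜ _)

/-- The exponent vector of the monomial `∏_{q ≠ p} y_q`, the greatest common divisor of `u_∅` and
`u_{p}`; for minimal `p` it is a witness for `v(H_P) ≤ |P| - 1`. -/
def eraseExponent (p : P) : P ⊕ P →₀ ℕ := ∑ q ∈ {p}ᶜ, Finsupp.single (Sum.inr q) 1

theorem monomial_eraseExponent (p : P) :
    monomial (eraseExponent p) (1 : K) = ∏ q ∈ {p}ᶜ, X (Sum.inr q) :=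
  monomial_sum_one _ _

theorem X_inl_mul_monomial_eraseExponent (p : P) :
    X (Sum.inl p) * monomial (eraseExponent p) 1 = posetGen K {p} := by
  rw [monomial_eraseExponent, posetGen, Finset.prod_singleton]

theorem X_inr_mul_monomial_eraseExponent (p : P) :
    X (Sum.inr p) * monomial (eraseExponent p) 1 = posetGen K ∅ := by
  rw [monomial_eraseExponent, posetGen, Finset.prod_empty, one_mul, Finset.compl_empty,
    Fintype.prod_eq_mul_prod_compl p]

theorem degree_eraseExponent_add_one (p : P) :
    (eraseExponent p).degree + 1 = Fintype.card P := by
  simp only [eraseExponent, map_sum, Finsupp.degree_single, Finset.sum_const, smul_eq_mul,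
    mul_one]
  rw [← Finset.card_singleton p, add_comm, Finset.card_add_card_compl]

theorem eraseExponent_apply_eq_zero (p : P) :
    ∀ v ∈ ({Sum.inl p, Sum.inr p} : Set (P ⊕ P)), eraseExponent p v = 0 := by
  classical
  rintro _ (rfl | rfl) <;> simp [eraseExponent, Finsupp.finsetSum_apply, Finsupp.single_apply]

variable [PartialOrder P]

theorem posetGen_mem {𝓘 : Finset P} (h𝓘 : IsLowerSet (𝓘 : Set P)) :
    posetGen K 𝓘 ∈ HibiIdeal K P :=
  Ideal.subset_span ⟨𝓘, fun _ _ hab hb => h𝓘 hab hb, rfl⟩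

theorem posetGen_empty_mem : posetGen K ∅ ∈ HibiIdeal K P :=
  posetGen_mem K (by simp [isLowerSet_empty])

theorem eq_top_of_isEmpty [IsEmpty P] : HibiIdeal K P = ⊤ := by
  rw [Ideal.eq_top_iff_one]
  simpa [posetGen] using posetGen_empty_mem K (P := P)

theorem le_pow_idealOfVars : HibiIdeal K P ≤ idealOfVars (P ⊕ P) K ^ Fintype.card P := by
  refine Ideal.span_le.2 ?_
  rintro _ ⟨𝓘, -, rfl⟩
  exact posetGen_mem_pow_idealOfVars K 𝓘

theorem le_span_X_pair (p : P) :
    HibiIdeal K P ≤ Ideal.span (X '' {Sum.inl p, Sum.inr p}) := by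
  refine Ideal.span_le.2 ?_
  rintro _ ⟨𝓘, -, rfl⟩
  by_cases hp : p ∈ 𝓘
  · exact Ideal.mem_of_dvd _ (X_inl_dvd_posetGen K hp) (Ideal.subset_span ⟨_, by simp, rfl⟩)
  · exact Ideal.mem_of_dvd _ (X_inr_dvd_posetGen K hp) (Ideal.subset_span ⟨_, by simp, rfl⟩)

theorem X_mul_monomial_eraseExponent_mem {p : P} (hp : IsMin p) :
    ∀ v ∈ ({Sum.inl p, Sum.inr p} : Set (P ⊕ P)),
      X v * monomial (eraseExponent p) 1 ∈ HibiIdeal K P := by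
  rintro _ (rfl | rfl)
  · rw [X_inl_mul_monomial_eraseExponent]
    refine posetGen_mem K ?_
    rw [Finset.coe_singleton, ← hp.Iic_eq]
    exact isLowerSet_Iic p
  · rw [X_inr_mul_monomial_eraseExponent]
    exact posetGen_empty_mem K

end HibiIdeal

/-- For a Hibi ideal `H_P`, `v(H_P^k) = k·|P| - 1` for all `k ≥ 1`. -/
theorem stmt19 (P : Type*) [Fintype P] [DecidableEq P] [PartialOrder P] :
    ∀ k : ℕ, 1 ≤ k →
      vNumber K ((HibiIdeal K P) ^ k) = k * Fintype.card P - 1 := by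
  intro k hk
  obtain ⟨k, rfl⟩ := Nat.exists_eq_add_of_le' hk
  rcases isEmpty_or_nonempty P with hP | hP
  · simp [HibiIdeal.eq_top_of_isEmpty, Ideal.top_pow, vNumber_top]
  · obtain ⟨p, hp⟩ := exists_minimal_of_wellFoundedLT (fun _ : P => True)
      (exists_const P |>.2 trivial)
    have hcard := HibiIdeal.degree_eraseExponent_add_one p
    rw [← hcard, Nat.succ_mul]
    exact vNumber_pow_succ_of_X_mul_monomial_mem (Set.mem_insert _ _)
      (hcard ▸ HibiIdeal.le_pow_idealOfVars K)
      (HibiIdeal.le_span_X_pair K p) (HibiIdeal.eraseExponent_apply_eq_zero p)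
      (HibiIdeal.X_mul_monomial_eraseExponent_mem K (minimal_true.1 hp)) k

end
end
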